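/- arXiv:2006.06293 — 4 statements merged into one kernel-verified Lean document; each statement's English description precedes it below -/
import Mathlib

section
/- Let K be a nonnegative random variable with K > 0 almost surely, E|log K| < ∞, E[log K] < 0, P(K > 1) > 0, and E[K^s] < ∞ for every s > 0. Then there exists β > 0 such that E[K^β] = 1. -/
open MeasureTheory

open Filter Topology

section Moments

variable {Ω : Type*} [MeasurableSpace Ω] {P : Measure Ω} {K : Ω → ℝ}

/-- The map `s ↦ E[K ^ s]` is continuous on any interval `[a, b]` of positive exponents at whose
endpoints the moments are finite. -/
lemma continuousOn_integral_rpow (hKm : Measurable K) (hK0 : ∀ ω, 0 ≤ K ω)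
    {a b : ℝ} (ha : 0 < a) (hKa : Integrable (fun ω => K ω ^ a) P)
    (hKb : Integrable (fun ω => K ω ^ b) P) :
    ContinuousOn (fun s : ℝ => ∫ ω, K ω ^ s ∂P) (Set.Icc a b) := by
  refine continuousOn_of_dominated (bound := fun ω => K ω ^ a + K ω ^ b)
    (fun s _ => (hKm.pow_const s).aestronglyMeasurable) (fun s hs => ?_) (hKa.add hKb) ?_
  · refine Eventually.of_forall fun ω => ?_
    have ha' := Real.rpow_nonneg (hK0 ω) a
    have hb' := Real.rpow_nonneg (hK0 ω) b
    rw [Real.norm_of_nonneg (Real.rpow_nonneg (hK0 ω) s)]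
    rcases le_total (K ω) 1 with h | h
    · have := Real.rpow_le_rpow_of_exponent_ge' (hK0 ω) h ha.le hs.1
      linarith
    · have := Real.rpow_le_rpow_of_exponent_le h hs.2
      linarith
  · refine Eventually.of_forall fun ω s hs => ContinuousAt.continuousWithinAt ?_
    exact Real.continuousAt_const_rpow' (ha.trans_le hs.1).ne'

/-- The difference quotients `E[(K ^ s - 1) / s]` converge to `E[log K]` as `s` decreases to `0`. -/
lemma tendsto_integral_rpow_sub_one_div [IsFiniteMeasure P]
    (hKm : Measurable K) (hKpos : ∀ᵐ ω ∂P, 0 < K ω)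
    (hlogint : Integrable (fun ω => Real.log (K ω)) P) (hKint : Integrable K P) :
    Tendsto (fun s : ℝ => ∫ ω, s⁻¹ * (K ω ^ s - 1) ∂P) (𝓝[>] 0)
      (𝓝 (∫ ω, Real.log (K ω) ∂P)) := by
  refine tendsto_integral_filter_of_dominated_convergence
    (fun ω => |Real.log (K ω)| + |K ω - 1|) ?_ ?_
    (hlogint.abs.add (hKint.sub (integrable_const 1)).abs) ?_
  · exact Eventually.of_forall fun s =>
      (((hKm.pow_const s).sub_const 1).const_mul _).aestronglyMeasurable
  · filter_upwards [Ioc_mem_nhdsGT (zero_lt_one' ℝ)] with s hs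
    filter_upwards [hKpos] with ω hω
    have hlower : Real.log (K ω) ≤ s⁻¹ * (K ω ^ s - 1) := by
      rw [le_inv_mul_iff₀ hs.1, ← Real.log_rpow hω]
      exact Real.log_le_sub_one_of_pos (Real.rpow_pos_of_pos hω s)
    have hupper : s⁻¹ * (K ω ^ s - 1) ≤ K ω - 1 := by
      rw [inv_mul_le_iff₀ hs.1]
      have := rpow_one_add_le_one_add_mul_self (s := K ω - 1) (by linarith) hs.1.le hs.2
      rw [add_sub_cancel] at this
      linarith
    rw [Real.norm_eq_abs, abs_le]
    constructor
    · linarith [neg_abs_le (Real.log (K ω)), abs_nonneg (K ω - 1)]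
    · linarith [le_abs_self (K ω - 1), abs_nonneg (Real.log (K ω))]
  · filter_upwards [hKpos] with ω hω
    have hderiv : HasDerivAt (fun s : ℝ => K ω ^ s) (Real.log (K ω)) 0 := by
      simpa using Real.hasStrictDerivAt_const_rpow hω 0 |>.hasDerivAt
    simpa using hderiv.tendsto_slope_zero_right

/-- If `E[log K] < 0`, then some moment of exponent in `(0, 1)` is less than `1`. -/
lemma exists_integral_rpow_lt_one [IsProbabilityMeasure P]
    (hKm : Measurable K) (hKpos : ∀ᵐ ω ∂P, 0 < K ω)
    (hlogint : Integrable (fun ω => Real.log (K ω)) P)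
    (hlogneg : ∫ ω, Real.log (K ω) ∂P < 0)
    (hmom : ∀ s : ℝ, 0 < s → Integrable (fun ω => K ω ^ s) P) :
    ∃ a ∈ Set.Ioo (0 : ℝ) 1, ∫ ω, K ω ^ a ∂P < 1 := by
  have hKint : Integrable K P := by simpa using hmom 1 one_pos
  have hev := (tendsto_integral_rpow_sub_one_div hKm hKpos hlogint hKint).eventually_lt_const
    hlogneg
  obtain ⟨a, hneg, ha⟩ := (hev.and (Ioo_mem_nhdsGT (zero_lt_one' ℝ))).exists
  refine ⟨a, ha, ?_⟩
  rw [integral_const_mul, integral_sub (hmom a ha.1) (integrable_const 1)] at hneg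
  have := neg_of_mul_neg_right hneg (inv_pos.2 ha.1).le
  simp at this
  linarith

/-- If `P(K > 1) > 0`, then some moment of exponent at least `1` is at least `1`. -/
lemma exists_one_le_integral_rpow [IsFiniteMeasure P]
    (hK0 : ∀ ω, 0 ≤ K ω) (hKgt1 : 0 < P {ω | 1 < K ω})
    (hmom : ∀ s : ℝ, 0 < s → Integrable (fun ω => K ω ^ s) P) :
    ∃ b : ℝ, 1 ≤ b ∧ 1 ≤ ∫ ω, K ω ^ b ∂P := by
  have hKint : Integrable K P := by simpa using hmom 1 one_pos
  have hint : Integrable (fun ω => max (K ω - 1) 0) P :=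
    (hKint.sub (integrable_const 1)).pos_part
  have hpos : 0 < ∫ ω, max (K ω - 1) 0 ∂P := by
    refine (integral_pos_iff_support_of_nonneg (fun ω => le_max_right (K ω - 1) 0) hint).2 ?_
    refine hKgt1.trans_le (measure_mono fun ω (hω : 1 < K ω) => ?_)
    exact (lt_max_of_lt_left (sub_pos.2 hω)).ne'
  obtain ⟨b, hb1, hb⟩ : ∃ b : ℝ, 1 ≤ b ∧ (∫ ω, max (K ω - 1) 0 ∂P)⁻¹ ≤ b :=
    ⟨_, le_max_left _ _, le_max_right _ _⟩
  refine ⟨b, hb1, ?_⟩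
  calc 1 ≤ b * ∫ ω, max (K ω - 1) 0 ∂P := (inv_le_iff_one_le_mul₀ hpos).1 hb
    _ = ∫ ω, b * max (K ω - 1) 0 ∂P := (integral_const_mul _ _).symm
    _ ≤ ∫ ω, K ω ^ b ∂P := by
      refine integral_mono (hint.const_mul b) (hmom b (by linarith)) fun ω => ?_
      rcases le_total (K ω) 1 with h | h
      · simpa [max_eq_right (sub_nonpos.2 h)] using Real.rpow_nonneg (hK0 ω) b
      · have := one_add_mul_self_le_rpow_one_add (s := K ω - 1) (by linarith) hb1
        rw [add_sub_cancel] at this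
        simp only [max_eq_left (sub_nonneg.2 h)]
        linarith

end Moments

/-- Let `K ≥ 0` be a random variable with `K > 0` a.s., `E|log K| < ∞`,
`E[log K] < 0`, `P(K > 1) > 0`, and `E[K^s] < ∞` for every `s > 0`. Then there exists `β > 0`
with `E[K^β] = 1`. -/
theorem stmt_6 {Ω : Type*} [MeasurableSpace Ω] (P : Measure Ω) [IsProbabilityMeasure P]
    (K : Ω → ℝ) (hKm : Measurable K) (hK0 : ∀ ω, 0 ≤ K ω)
    (hKpos : ∀ᵐ ω ∂P, 0 < K ω)
    (hlogint : Integrable (fun ω => Real.log (K ω)) P)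
    (hlogneg : ∫ ω, Real.log (K ω) ∂P < 0)
    (hKgt1 : 0 < P {ω | 1 < K ω})
    (hmom : ∀ s : ℝ, 0 < s → Integrable (fun ω => K ω ^ s) P) :
    ∃ β > (0 : ℝ), ∫ ω, K ω ^ β ∂P = 1 := by
  obtain ⟨a, ⟨ha0, ha1⟩, ha⟩ := exists_integral_rpow_lt_one hKm hKpos hlogint hlogneg hmom
  obtain ⟨b, hb1, hb⟩ := exists_one_le_integral_rpow hK0 hKgt1 hmom
  have hcont := continuousOn_integral_rpow hKm hK0 ha0 (hmom a ha0) (hmom b (by linarith))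
  obtain ⟨β, hβ, hβ1⟩ := intermediate_value_Icc (by linarith) hcont ⟨ha.le, hb⟩
  exact ⟨β, ha0.trans_le hβ.1, hβ1⟩
end

section
/- Let (S, ||·||) be a separable Banach space, Ψ a random Lipschitz function from S to S with random Lipschitz constant K_Ψ, and W a random element of S independent of Ψ such that W has the same distribution as Ψ(W) (a distributional fixed point). Fix w* ∈ S and p ≥ 1, and suppose q := (E[K_Ψ^p])^{1/p} < 1, c := q||w*|| + (E||Ψ(w*)||^p)^{1/p} < ∞, and E||W||^p < ∞. Then (E||W||^p)^{1/p} ≤ κ_p^+ := c/(1−q), and consequently P(||W|| > t) ≤ (κ_p^+)^p t^{−p} for all t > 0. -/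
open MeasureTheory ProbabilityTheory

/-- The `L^p` seminorm of a product of functions of independent variables factorizes. -/
theorem eLpNorm_prod_mul {α β : Type*} [MeasurableSpace α] [MeasurableSpace β]
    {μ : Measure α} {ν : Measure β} [SFinite ν] {f : α → ℝ} {g : β → ℝ}
    (hf : AEMeasurable f μ) (hg : AEMeasurable g ν) {p : ENNReal} (hp0 : p ≠ 0) (hp : p ≠ ⊤) :
    eLpNorm (fun x : α × β => f x.1 * g x.2) p (μ.prod ν) = eLpNorm f p μ * eLpNorm g p ν := by
  simp only [eLpNorm_eq_lintegral_rpow_enorm_toReal hp0 hp, enorm_mul,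
    ENNReal.mul_rpow_of_nonneg _ _ ENNReal.toReal_nonneg]
  rw [lintegral_prod_mul (hf.enorm.pow_const _) (hg.enorm.pow_const _),
    ENNReal.mul_rpow_of_nonneg _ _ (by positivity)]

/-- A real-exponent form of the formula for the `L^p` seminorm as an integral. -/
theorem eLpNorm_ofReal_eq_integral {α E : Type*} [MeasurableSpace α] [NormedAddCommGroup E]
    {μ : Measure α} {f : α → E} (hf : AEStronglyMeasurable f μ) {p : ℝ} (hp : 0 < p)
    (hint : Integrable (fun x => ‖f x‖ ^ p) μ) :
    eLpNorm f (ENNReal.ofReal p) μ = ENNReal.ofReal ((∫ x, ‖f x‖ ^ p ∂μ) ^ (1 / p)) := by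
  have hp0 : ENNReal.ofReal p ≠ 0 := by simpa using hp
  have hmem : MemLp f (ENNReal.ofReal p) μ := by
    rw [← integrable_norm_rpow_iff hf hp0 ENNReal.ofReal_ne_top, ENNReal.toReal_ofReal hp.le]
    exact hint
  rw [hmem.eLpNorm_eq_integral_rpow_norm hp0 ENNReal.ofReal_ne_top, ENNReal.toReal_ofReal hp.le,
    one_div]

/-- (Moment and tail bound at a distributional fixed point.) Let `S` be a
separable Banach space, `Ψ(·, ω')` a random Lipschitz function with random Lipschitz constant
`K(ω')` (noise `ω' ~ μ`), and `W` a random element of `S`, independent of `Ψ` (encoded via the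
product measure `P ⊗ μ`), such that `Ψ(W)` has the same distribution as `W`. Fix `w* ∈ S`,
`p ≥ 1`, and suppose `q := (E[K^p])^{1/p} < 1`, `c := q ‖w*‖ + (E‖Ψ(w*)‖^p)^{1/p} < ∞` and
`E‖W‖^p < ∞`. Then `(E‖W‖^p)^{1/p} ≤ κ⁺ := c/(1-q)` and consequently
`P(‖W‖ > t) ≤ (κ⁺)^p t^{-p}` for all `t > 0`. -/
theorem stmt_10 {Ω Ω' S : Type*} [MeasurableSpace Ω] [MeasurableSpace Ω']
    [NormedAddCommGroup S] [NormedSpace ℝ S] [CompleteSpace S]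
    [TopologicalSpace.SeparableSpace S] [MeasurableSpace S] [BorelSpace S]
    (P : Measure Ω) [IsProbabilityMeasure P] (μ : Measure Ω') [IsProbabilityMeasure μ]
    (Ψ : S × Ω' → S) (hΨ : Measurable Ψ)
    (K : Ω' → ℝ) (hKm : Measurable K) (hK0 : ∀ ω', 0 ≤ K ω')
    (hLip : ∀ᵐ ω' ∂μ, ∀ v w : S, ‖Ψ (v, ω') - Ψ (w, ω')‖ ≤ K ω' * ‖v - w‖)
    (W : Ω → S) (hWm : Measurable W)
    (hfix : Measure.map (fun x : Ω × Ω' => Ψ (W x.1, x.2)) (P.prod μ) = Measure.map W P)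
    (wst : S) (p : ℝ) (hp : 1 ≤ p)
    (hKint : Integrable (fun ω' => K ω' ^ p) μ)
    (hΨint : Integrable (fun ω' => ‖Ψ (wst, ω')‖ ^ p) μ)
    (hWint : Integrable (fun ω => ‖W ω‖ ^ p) P)
    (q c : ℝ)
    (hq : q = (∫ ω', K ω' ^ p ∂μ) ^ (1 / p)) (hq1 : q < 1)
    (hc : c = q * ‖wst‖ + (∫ ω', ‖Ψ (wst, ω')‖ ^ p ∂μ) ^ (1 / p)) :
    (∫ ω, ‖W ω‖ ^ p ∂P) ^ (1 / p) ≤ c / (1 - q) ∧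
    ∀ t : ℝ, 0 < t →
      P {ω | t < ‖W ω‖} ≤ ENNReal.ofReal ((c / (1 - q)) ^ p / t ^ p) := by
  have : SecondCountableTopology S := UniformSpace.secondCountable_of_separable S
  have hp0 : 0 < p := by linarith
  set r := ENNReal.ofReal p with hr
  have hr0 : r ≠ 0 := by simpa [hr] using hp0
  have hrt : r ≠ ⊤ := ENNReal.ofReal_ne_top
  have hr1 : 1 ≤ r := by simpa [hr] using hp
  set m := (∫ ω, ‖W ω‖ ^ p ∂P) ^ (1 / p) with hm
  set d := (∫ ω', ‖Ψ (wst, ω')‖ ^ p ∂μ) ^ (1 / p) with hd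
  have hm0 : 0 ≤ m := by positivity
  have hd0 : 0 ≤ d := by positivity
  have hKnorm : ∀ ω', ‖K ω'‖ = K ω' := fun ω' => Real.norm_of_nonneg (hK0 ω')
  have hq0 : 0 ≤ q := by
    rw [hq]
    exact Real.rpow_nonneg (integral_nonneg fun ω' => Real.rpow_nonneg (hK0 ω') p) _
  have hΨst : Measurable fun ω' => Ψ (wst, ω') := hΨ.comp measurable_prodMk_left
  have eW : eLpNorm W r P = ENNReal.ofReal m :=
    eLpNorm_ofReal_eq_integral hWm.aestronglyMeasurable hp0 hWint
  have eΨ : eLpNorm (fun ω' => Ψ (wst, ω')) r μ = ENNReal.ofReal d :=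
    eLpNorm_ofReal_eq_integral hΨst.aestronglyMeasurable hp0 hΨint
  have eK : eLpNorm K r μ = ENNReal.ofReal q := by
    have h := eLpNorm_ofReal_eq_integral hKm.aestronglyMeasurable hp0
      (by simpa only [hKnorm] using hKint)
    simpa only [hKnorm, ← hq] using h
  have hΨW : Measurable fun x : Ω × Ω' => Ψ (W x.1, x.2) := by fun_prop
  have efix : eLpNorm (fun x : Ω × Ω' => Ψ (W x.1, x.2)) r (P.prod μ) = eLpNorm W r P := by
    have h := congrArg (fun ν => eLpNorm (id : S → S) r ν) hfix
    rwa [eLpNorm_map_measure aestronglyMeasurable_id hΨW.aemeasurable,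
      eLpNorm_map_measure aestronglyMeasurable_id hWm.aemeasurable] at h
  have hpt : ∀ᵐ x ∂P.prod μ, ‖Ψ (W x.1, x.2)‖ ≤
      (‖W x.1‖ * K x.2 + ‖wst‖ * K x.2) + ‖Ψ (wst, x.2)‖ := by
    filter_upwards [Measure.quasiMeasurePreserving_snd.ae hLip] with x hx
    have h₁ := hx (W x.1) wst
    have h₂ := norm_sub_le (W x.1) wst
    have h₃ := norm_le_norm_sub_add (Ψ (W x.1, x.2)) (Ψ (wst, x.2))
    have h₄ := mul_le_mul_of_nonneg_left h₂ (hK0 x.2)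
    linarith
  have hbound : ENNReal.ofReal m ≤ ENNReal.ofReal m * ENNReal.ofReal q +
      ENNReal.ofReal ‖wst‖ * ENNReal.ofReal q + ENNReal.ofReal d := by
    have e₁ : eLpNorm (fun x : Ω × Ω' => ‖W x.1‖ * K x.2) r (P.prod μ) =
        ENNReal.ofReal m * ENNReal.ofReal q := by
      rw [eLpNorm_prod_mul (f := fun ω => ‖W ω‖) hWm.norm.aemeasurable hKm.aemeasurable hr0 hrt,
        eLpNorm_norm, eW, eK]
    have e₂ : eLpNorm (fun x : Ω × Ω' => ‖wst‖ * K x.2) r (P.prod μ) =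
        ENNReal.ofReal ‖wst‖ * ENNReal.ofReal q := by
      rw [eLpNorm_prod_mul (f := fun _ => ‖wst‖) aemeasurable_const hKm.aemeasurable hr0 hrt,
        eLpNorm_norm, eLpNorm_const _ hr0 (IsProbabilityMeasure.ne_zero P), eK]
      simp
    have e₃ : eLpNorm (fun x : Ω × Ω' => ‖Ψ (wst, x.2)‖) r (P.prod μ) = ENNReal.ofReal d := by
      rw [eLpNorm_norm, ← eΨ]
      exact eLpNorm_comp_measurePreserving hΨst.aestronglyMeasurable measurePreserving_snd
    rw [← e₁, ← e₂, ← e₃, ← eW, ← efix]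
    refine (eLpNorm_mono_ae_real hpt).trans ((eLpNorm_add_le ?_ ?_ hr1).trans ?_)
    · exact Measurable.aestronglyMeasurable (by fun_prop)
    · exact Measurable.aestronglyMeasurable (by fun_prop)
    · gcongr
      refine eLpNorm_add_le ?_ ?_ hr1 <;> exact Measurable.aestronglyMeasurable (by fun_prop)
  have hmain : m ≤ c / (1 - q) := by
    rw [← ENNReal.ofReal_mul hm0, ← ENNReal.ofReal_mul (norm_nonneg _),
      ← ENNReal.ofReal_add (by positivity) (by positivity),
      ← ENNReal.ofReal_add (by positivity) hd0, ENNReal.ofReal_le_ofReal_iff (by positivity)]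
      at hbound
    rw [le_div_iff₀ (by linarith), hc]
    linarith
  refine ⟨hmain, fun t ht => ?_⟩
  have hmarkov := meas_ge_le_mul_pow_eLpNorm_enorm P hr0 hrt hWm.aestronglyMeasurable
    (ε := ENNReal.ofReal t) (by simpa using ht) (by simp)
  rw [eW, hr, ENNReal.toReal_ofReal hp0.le, ← ENNReal.ofReal_inv_of_pos ht,
    ENNReal.ofReal_rpow_of_nonneg (by positivity) hp0.le,
    ENNReal.ofReal_rpow_of_nonneg hm0 hp0.le, ← ENNReal.ofReal_mul (by positivity)] at hmarkov
  refine (measure_mono fun ω hω => ?_).trans (hmarkov.trans (ENNReal.ofReal_le_ofReal ?_))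
  · rw [Set.mem_ofPred_eq, ← ofReal_norm]
    exact ENNReal.ofReal_le_ofReal (le_of_lt hω)
  · rw [Real.inv_rpow ht.le, div_eq_inv_mul]
    gcongr
end

section
/- Let f : [0,∞) → R be a non-decreasing function that is unbounded above. Suppose there exist constants a ≥ c > 1 and b, x ≥ 0 and t_0 ≥ x such that f(ct) ≥ a f(t − x) − b for all t ≥ t_0. Then for every γ with 0 < γ < (log a)/(log c), liminf_{t→∞} t^{−γ} f(t) > 0. -/
/-- Let `f : [0,∞) → ℝ` be non-decreasing and unbounded above. If there are
constants `a ≥ c > 1`, `b, x ≥ 0` and `t₀ ≥ x` such that `f (c t) ≥ a f (t - x) - b` for all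
`t ≥ t₀`, then for every `0 < γ < log a / log c` we have `liminf_{t → ∞} t^(-γ) f t > 0`,
i.e. there are `δ > 0` and `T > 0` with `f t ≥ δ t^γ` for all `t ≥ T`. -/
theorem stmt_13 (f : ℝ → ℝ)
    (hmono : MonotoneOn f (Set.Ici (0 : ℝ)))
    (hunb : ∀ M : ℝ, ∃ t : ℝ, 0 ≤ t ∧ M < f t)
    (a c b x t₀ : ℝ) (hac : c ≤ a) (hc : 1 < c) (hb : 0 ≤ b) (hx : 0 ≤ x) (ht₀ : x ≤ t₀)
    (hrec : ∀ t : ℝ, t₀ ≤ t → a * f (t - x) - b ≤ f (c * t)) :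
    ∀ γ : ℝ, 0 < γ → γ < Real.log a / Real.log c →
      ∃ δ > (0 : ℝ), ∃ T > (0 : ℝ), ∀ t : ℝ, T ≤ t → δ * t ^ γ ≤ f t := by
  intro γ hγ hγlt
  have hc0 : 0 < c := by linarith
  have ha1 : 0 < a - 1 := by linarith
  have ha0 : 0 < a := by linarith
  have hc1 : 0 < c - 1 := by linarith
  have hcγ : c ^ γ ≤ a := by
    rw [lt_div_iff₀ (Real.log_pos hc)] at hγlt
    rw [Real.rpow_def_of_pos hc0, ← Real.le_log_iff_exp_le ha0]
    linarith
  -- `K` makes `s ↦ c * (s + x)` a dilation centred at `-K`; subtracting `B` absorbs `b`.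
  obtain ⟨K, hK0, hK⟩ : ∃ K : ℝ, 0 ≤ K ∧ c * x + K = c * K :=
    ⟨c * x / (c - 1), by positivity, by field_simp; ring⟩
  obtain ⟨B, hB0, hB⟩ : ∃ B : ℝ, 0 ≤ B ∧ b + B = a * B :=
    ⟨b / (a - 1), by positivity, by field_simp; ring⟩
  obtain ⟨r, hr0, hr⟩ := hunb (1 + B)
  obtain ⟨s, hs1, hst, hs⟩ : ∃ s : ℝ, 1 ≤ s ∧ t₀ ≤ s ∧ 1 + B ≤ f s := by
    refine ⟨max r (max 1 t₀), by simp, by simp, hr.le.trans (hmono hr0 ?_ (by simp))⟩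
    exact hr0.trans (le_max_left _ _)
  have hsK : 0 < s + K := by linarith
  have growth : ∀ n : ℕ, a ^ n + B ≤ f (c ^ n * (s + K) - K) := by
    intro n
    induction n with
    | zero => simpa using hs
    | succ n ih =>
      have hge : s + K ≤ c ^ n * (s + K) :=
        le_mul_of_one_le_left hsK.le (one_le_pow₀ hc.le)
      have h := hrec (c ^ n * (s + K) - K + x) (by linarith)
      rw [add_sub_cancel_right] at h
      have hstep : c * (c ^ n * (s + K) - K + x) = c ^ (n + 1) * (s + K) - K := by
        rw [pow_succ]; linear_combination hK
      rw [hstep] at h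
      have := mul_le_mul_of_nonneg_left ih ha0.le
      rw [pow_succ]
      linarith
  have hD : 0 < c * (s + K) := mul_pos hc0 hsK
  refine ⟨((c * (s + K)) ^ γ)⁻¹, by positivity, s, by linarith, fun t ht => ?_⟩
  obtain ⟨n, hn, hn'⟩ := exists_nat_pow_near
    (show 1 ≤ (t + K) / (s + K) by rw [one_le_div hsK]; linarith) hc
  rw [le_div_iff₀ hsK] at hn
  rw [div_lt_iff₀ hsK, pow_succ] at hn'
  have hge : s + K ≤ c ^ n * (s + K) :=
    le_mul_of_one_le_left hsK.le (one_le_pow₀ hc.le)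
  have hf : f (c ^ n * (s + K) - K) ≤ f t :=
    hmono (Set.mem_Ici.2 (by linarith)) (Set.mem_Ici.2 (by linarith)) (by linarith)
  have ht0 : 0 ≤ t := by linarith
  calc ((c * (s + K)) ^ γ)⁻¹ * t ^ γ
      = (t / (c * (s + K))) ^ γ := by
        rw [Real.div_rpow ht0 hD.le, div_eq_inv_mul]
    _ ≤ (c ^ n) ^ γ := by
        refine Real.rpow_le_rpow (by positivity) ?_ hγ.le
        rw [div_le_iff₀ hD]
        linarith
    _ = (c ^ γ) ^ n := by
        rw [← Real.rpow_natCast_mul hc0.le, mul_comm, Real.rpow_mul_natCast hc0.le]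
    _ ≤ a ^ n := pow_le_pow_left₀ (by positivity) hcγ n
    _ ≤ f t := by linarith [growth n]
end

section
/- Let X be a nonnegative random variable and let 0 < γ < α. If liminf_{t→∞} t^{−γ} E[X^α · 1_{X ≤ t}] > 0, then there exist constants C > 0 and t_0 > 0 such that P(X ≥ t) ≥ C t^{−(α/γ)(α−γ)} for all t ≥ t_0. -/
open MeasureTheory

/-- A truncated moment splits at level `t`: the part below `t` contributes at most `t ^ α`, the
part above at most `s ^ α` times the tail probability. -/
lemma setIntegral_rpow_le_add_mul_tail {Ω : Type*} [MeasurableSpace Ω] (P : Measure Ω)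
    [IsProbabilityMeasure P] {X : Ω → ℝ} (hX : Measurable X) (hX0 : ∀ ω, 0 ≤ X ω)
    {α s t : ℝ} (hα : 0 ≤ α) (hs : 0 ≤ s) (ht : 0 ≤ t) :
    ∫ ω in {ω | X ω ≤ s}, X ω ^ α ∂P ≤ t ^ α + s ^ α * P.real {ω | t ≤ X ω} := by
  have hA : MeasurableSet {ω | t ≤ X ω} := measurableSet_le measurable_const hX
  have hS : MeasurableSet {ω | X ω ≤ s} := measurableSet_le hX measurable_const
  have hint : Integrable ({ω | t ≤ X ω}.indicator fun _ => s ^ α) P :=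
    (integrable_const _).indicator hA
  have hg : ∫ ω, (t ^ α + {ω | t ≤ X ω}.indicator (fun _ => s ^ α) ω) ∂P
      = t ^ α + s ^ α * P.real {ω | t ≤ X ω} := by
    rw [integral_add (integrable_const _) hint, integral_indicator_const _ hA]
    simp [mul_comm]
  rw [← integral_indicator hS, ← hg]
  refine integral_mono_of_nonneg (.of_forall fun ω => ?_) ((integrable_const _).add hint)
    (.of_forall fun ω => ?_)
  · exact Set.indicator_nonneg (fun ω _ => Real.rpow_nonneg (hX0 ω) α) ω
  · have h1 : 0 ≤ t ^ α := Real.rpow_nonneg ht α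
    have h2 : 0 ≤ s ^ α := Real.rpow_nonneg hs α
    by_cases hωs : X ω ≤ s <;> by_cases hωt : t ≤ X ω <;>
      simp only [Set.indicator, Set.mem_ofPred_eq, hωs, hωt, if_true, if_false]
    · linarith [Real.rpow_le_rpow (hX0 ω) hωs hα]
    · linarith [Real.rpow_le_rpow (hX0 ω) (not_le.1 hωt).le hα]
    · positivity
    · positivity

/-- Let `X ≥ 0` be a random variable and `0 < γ < α`. If
`liminf_{t→∞} t^(-γ) E[X^α 1_{X ≤ t}] > 0` (i.e. the truncated moment is eventually bounded
below by `κ t^γ` for some `κ > 0`), then there are `C > 0` and `t₀ > 0` such that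
`P(X ≥ t) ≥ C t^(-(α/γ)(α-γ))` for all `t ≥ t₀`. -/
theorem stmt_14 {Ω : Type*} [MeasurableSpace Ω] (P : Measure Ω) [IsProbabilityMeasure P]
    (X : Ω → ℝ) (hX : Measurable X) (hX0 : ∀ ω, 0 ≤ X ω)
    (γ α : ℝ) (h0γ : 0 < γ) (hγα : γ < α)
    (κ T : ℝ) (hκ : 0 < κ)
    (hliminf : ∀ t : ℝ, T ≤ t → κ ≤ t ^ (-γ) * ∫ ω in {ω | X ω ≤ t}, X ω ^ α ∂P) :
    ∃ C > (0 : ℝ), ∃ t₀ > (0 : ℝ), ∀ t : ℝ, t₀ ≤ t →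
      ENNReal.ofReal (C * t ^ (-(α / γ) * (α - γ))) ≤ P {ω | t ≤ X ω} := by
  have hα : 0 < α := h0γ.trans hγα
  set K : ℝ := (2 / κ) ^ (1 / γ) with hK
  have hK0 : 0 < K := by positivity
  have hKγ : K ^ γ = 2 / κ := by
    rw [hK, ← Real.rpow_mul (by positivity), one_div_mul_cancel h0γ.ne', Real.rpow_one]
  have hlim : Filter.Tendsto (fun t : ℝ => K * t ^ (α / γ)) Filter.atTop Filter.atTop :=
    (tendsto_rpow_atTop (div_pos hα h0γ)).const_mul_atTop hK0
  obtain ⟨t₁, ht₁⟩ := Filter.eventually_atTop.1 (hlim.eventually_ge_atTop T)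
  refine ⟨K ^ (-α), by positivity, max t₁ 1, by positivity, fun t ht => ?_⟩
  have ht0 : 0 < t := one_pos.trans_le ((le_max_right _ _).trans ht)
  set s : ℝ := K * t ^ (α / γ) with hs
  have hs0 : 0 < s := by positivity
  have hsγ : κ * s ^ γ = 2 * t ^ α := by
    rw [hs, Real.mul_rpow hK0.le (by positivity), hKγ, ← Real.rpow_mul ht0.le,
      div_mul_cancel₀ _ h0γ.ne']
    field_simp
  have hlow : κ * s ^ γ ≤ ∫ ω in {ω | X ω ≤ s}, X ω ^ α ∂P := by
    have h := hliminf s (ht₁ t ((le_max_left _ _).trans ht))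
    rwa [Real.rpow_neg hs0.le, ← div_eq_inv_mul, le_div_iff₀ (by positivity)] at h
  have hup := setIntegral_rpow_le_add_mul_tail P hX hX0 hα.le hs0.le ht0.le
  have htail : t ^ α ≤ s ^ α * P.real {ω | t ≤ X ω} := by linarith
  have hrate : K ^ (-α) * t ^ (-(α / γ) * (α - γ)) = t ^ α / s ^ α := by
    rw [hs, Real.mul_rpow hK0.le (by positivity), ← Real.rpow_mul ht0.le, Real.rpow_neg hK0.le,
      show -(α / γ) * (α - γ) = α - α / γ * α by field_simp; ring, Real.rpow_sub ht0]
    field_simp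
  rw [hrate, ← ofReal_measureReal]
  exact ENNReal.ofReal_le_ofReal ((div_le_iff₀' (by positivity)).2 htail)
end
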